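/- arXiv:1502.02070 — 3 statements merged into one kernel-verified Lean document; each statement's English description precedes it below -/
import Mathlib

section
/- For every prime power q, there exists a finite family of closed balls in EuclideanSpace ℝ (Fin (q^3 − q^2 + q + 1)) with positive radii and pairwise disjoint interiors (dist(c_i,c_j) ≥ r_i + r_j for i ≠ j) whose tangency graph (i ~ j iff i ≠ j and dist(c_i,c_j) = r_i + r_j) has chromatic number exactly q^3 + 3. -/
/-- The tangency graph of a family of balls with centers `c` and radii `r`:
two indices are adjacent iff they are distinct and the corresponding balls are
tangent. -/
def tangencyGraph {d n : ℕ} (c : Fin n → EuclideanSpace ℝ (Fin d)) (r : Fin n → ℝ) :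
    SimpleGraph (Fin n) where
  Adj i j := i ≠ j ∧ dist (c i) (c j) = r i + r j
  symm := by
    constructor
    rintro i j ⟨hij, h⟩
    exact ⟨hij.symm, by rwa [dist_comm, add_comm]⟩
  loopless := by
    constructor
    rintro i ⟨h, -⟩
    exact h rfl

/-!
Join two points of the elliptic quadric `Q⁻(5, q)` when they are not orthogonal. This graph is
strongly regular with parameters `((q + 1)(q³ + 1), q⁴, q(q - 1)(q² + 1), q³(q - 1))` and its
nontrivial eigenvalues are `q²` and `-q`. The eigenspace of `q²` has dimension `q³ - q² + q`, and
projecting the vertices onto it gives points on a sphere such that adjacent vertices are at the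
minimum distance. Equal balls around these points therefore have the given graph as their
tangency graph. In one further dimension, two tangent balls centered on the axis of the sphere can
be made to touch all of them, which raises the chromatic number by two.

Independent sets of the graph have at most `q + 1` points, so it is not `q³`-colorable. Removing
one ball at a time lowers the chromatic number by at most one, hence some subfamily has chromatic
number exactly `q³ + 3`.
-/

section Coloring

variable {V W : Type*} {G : SimpleGraph V}

theorem colorable_induce_insert {s : Set V} {n : ℕ} (v : V) (h : (G.induce s).Colorable n) :
    (G.induce (insert v s)).Colorable (n + 1) := by
  classical
  obtain ⟨C⟩ := h
  refine ⟨SimpleGraph.Coloring.mk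
    (fun w ↦ if hw : w.1 ∈ s then (C ⟨w, hw⟩).castSucc else Fin.last n) ?_⟩
  rintro ⟨a, ha⟩ ⟨b, hb⟩ (hab : G.Adj a b)
  by_cases has : a ∈ s <;> by_cases hbs : b ∈ s
  · have hC : C ⟨a, has⟩ ≠ C ⟨b, hbs⟩ := C.valid hab
    simpa [has, hbs] using hC
  · simp [has, hbs, Fin.castSucc_ne_last]
  · simp [has, hbs, (Fin.castSucc_ne_last _).symm]
  · obtain rfl : a = v := ha.resolve_right has
    obtain rfl : b = a := hb.resolve_right hbs
    exact (G.irrefl hab).elim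

theorem exists_chromaticNumber_induce_eq_succ [Finite V] {n : ℕ} (h : ¬G.Colorable n) :
    ∃ s : Set V, (G.induce s).chromaticNumber = (n + 1 : ℕ) := by
  have huniv : ¬(G.induce Set.univ).Colorable n := fun hC ↦
    h ((SimpleGraph.induceUnivIso G).symm.toHom |> hC.of_hom)
  obtain ⟨s, hs, hmin⟩ :=
    exists_minimal_of_wellFoundedLT (fun s : Set V ↦ ¬(G.induce s).Colorable n) ⟨_, huniv⟩
  have hne : s.Nonempty := by
    by_contra! rfl
    exact hs (.of_isEmpty n)
  obtain ⟨v, hv⟩ := hne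
  have hsdiff : (G.induce (s \ {v})).Colorable n := by
    by_contra hC
    exact (hmin hC Set.sdiff_subset hv).2 rfl
  have hcol : (G.induce s).Colorable (n + 1) :=
    Set.insert_sdiff_self_of_mem hv ▸ colorable_induce_insert v hsdiff
  exact ⟨s, SimpleGraph.chromaticNumber_eq_iff_colorable_not_colorable.2 ⟨hcol, hs⟩⟩

theorem colorable_of_colorable_add_card {H : SimpleGraph W} (f : G →g H) {s : Finset W}
    (hs : H.IsClique s) (hfs : ∀ v, ∀ w ∈ s, H.Adj (f v) w) {n : ℕ}
    (h : H.Colorable (n + s.card)) : G.Colorable n := by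
  classical
  obtain ⟨C⟩ := h
  have hcard : (s.image C).card = s.card :=
    Finset.card_image_of_injOn fun _ hv _ hw hvw ↦
      by_contra fun hne ↦ C.valid (hs hv hw hne) hvw
  let C' : G.Coloring {i // i ∉ s.image C} := SimpleGraph.Coloring.mk
    (fun v ↦ ⟨C (f v), by
      simp only [Finset.mem_image, not_exists, not_and]
      exact fun w hw ↦ (C.valid (hfs v w hw)).symm⟩)
    (fun hab ↦ by simpa using C.valid (f.map_adj hab))
  have hcard' : Fintype.card {i // i ∉ s.image C} = n := by
    rw [Fintype.card_subtype_compl, Fintype.card_coe, Fintype.card_fin, hcard, Nat.add_sub_cancel]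
  exact hcard' ▸ C'.colorable

theorem card_le_mul_of_colorable [Fintype V] {n a : ℕ}
    (hind : ∀ s : Finset V, G.IsIndepSet s → s.card ≤ a) (h : G.Colorable n) :
    Fintype.card V ≤ n * a := by
  classical
  obtain ⟨C⟩ := h
  calc Fintype.card V = ∑ i, (Finset.univ.filter (C · = i)).card :=
        Finset.card_eq_sum_card_fiberwise (fun _ _ ↦ Finset.mem_univ _)
    _ ≤ ∑ _i : Fin n, a := Finset.sum_le_sum fun i _ ↦ hind _ (by
        simpa [SimpleGraph.Coloring.colorClass] using C.isIndepSet_colorClass i)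
    _ = n * a := by simp

theorem card_le_of_isIndepSet_of_isSRGWith [Fintype V] [DecidableRel G.Adj] {n k l m : ℕ}
    (hG : G.IsSRGWith n k l m) {s : Finset V} (hs : G.IsIndepSet s) (hcard : 1 < s.card) :
    s.card + (2 * k - m) ≤ n := by
  classical
  obtain ⟨x, hx, y, hy, hxy⟩ := Finset.one_lt_card.1 hcard
  have hdisj : Disjoint s (G.neighborFinset x ∪ G.neighborFinset y) := by
    refine Finset.disjoint_left.2 fun z hz hzxy ↦ ?_
    simp only [Finset.mem_union, SimpleGraph.mem_neighborFinset] at hzxy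
    rcases hzxy with hadj | hadj
    · exact hs hx hz hadj.ne hadj
    · exact hs hy hz hadj.ne hadj
  rw [← hG.card_neighborFinset_union_of_not_adj hxy (hs hx hy hxy),
    ← Finset.card_union_of_disjoint hdisj, ← hG.card]
  exact Finset.card_le_univ _

end Coloring

section Packing

/-- A family of closed balls with centers `c` and radii `r` in a metric space is a packing. -/
structure IsBallPacking {ι X : Type*} [PseudoMetricSpace X] (c : ι → X) (r : ι → ℝ) : Prop where
  radius_pos : ∀ i, 0 < r i
  add_le_dist : ∀ i j, i ≠ j → r i + r j ≤ dist (c i) (c j)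

/-- The tangency graph of a family of balls with centers `c` and radii `r`, for an arbitrary index
type and an arbitrary ambient metric space. -/
def contactGraph {ι X : Type*} [PseudoMetricSpace X] (c : ι → X) (r : ι → ℝ) :
    SimpleGraph ι where
  Adj i j := i ≠ j ∧ dist (c i) (c j) = r i + r j
  symm := ⟨fun i j h ↦ ⟨h.1.symm, by rw [dist_comm, h.2, add_comm]⟩⟩
  loopless := ⟨fun _ h ↦ h.1 rfl⟩

variable {ι κ X Y : Type*} [PseudoMetricSpace X] [PseudoMetricSpace Y] {c : ι → X} {r : ι → ℝ}

theorem IsBallPacking.comp_embedding (h : IsBallPacking c r) (e : κ ↪ ι) {φ : X → Y}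
    (hφ : Isometry φ) : IsBallPacking (φ ∘ c ∘ e) (r ∘ e) where
  radius_pos i := h.radius_pos (e i)
  add_le_dist i j hij := by
    simpa [hφ.dist_eq] using h.add_le_dist (e i) (e j) (e.injective.ne hij)

theorem contactGraph_comp_embedding (c : ι → X) (r : ι → ℝ) (e : κ ↪ ι) {φ : X → Y}
    (hφ : Isometry φ) :
    contactGraph (φ ∘ c ∘ e) (r ∘ e) = (contactGraph c r).comap e := by
  ext i j
  simp [contactGraph, hφ.dist_eq]

theorem exists_ball_packing_chromaticNumber_eq_succ [Finite ι] {E : Type*} [NormedAddCommGroup E]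
    [InnerProductSpace ℝ E] [FiniteDimensional ℝ E] {c : ι → E} (hc : IsBallPacking c r) {n d : ℕ}
    (hd : Module.finrank ℝ E = d) (hn : ¬(contactGraph c r).Colorable n) :
    ∃ (m : ℕ) (c' : Fin m → EuclideanSpace ℝ (Fin d)) (r' : Fin m → ℝ),
      IsBallPacking c' r' ∧ (tangencyGraph c' r').chromaticNumber = (n + 1 : ℕ) := by
  obtain ⟨s, hs⟩ := exists_chromaticNumber_induce_eq_succ hn
  obtain ⟨m, ⟨e⟩⟩ := Finite.exists_equiv_fin s
  let φ := ((stdOrthonormalBasis ℝ E).reindex (finCongr hd)).repr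
  let g : Fin m ↪ ι := e.symm.toEmbedding.trans (Function.Embedding.subtype _)
  refine ⟨m, φ ∘ c ∘ g, r ∘ g, hc.comp_embedding g φ.isometry, ?_⟩
  have hiso : contactGraph (φ ∘ c ∘ g) (r ∘ g) ≃g (contactGraph c r).induce s :=
    contactGraph_comp_embedding c r g φ.isometry ▸
      SimpleGraph.Iso.comap e.symm ((contactGraph c r).induce s)
  exact (SimpleGraph.chromaticNumber_congr hiso).trans hs

end Packing

section Bipyramid

variable {ι E : Type*} [NormedAddCommGroup E]

/-- The points of `f` in the hyperplane `E × {0}` together with the two apexes `(0, h)` and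
`(0, -h)`. -/
noncomputable def bipyramidCenter (f : ι → E) (h : ℝ) : ι ⊕ Bool → WithLp 2 (E × ℝ) :=
  Sum.elim (fun i ↦ WithLp.toLp 2 (f i, 0)) (fun b ↦ WithLp.toLp 2 (0, if b then h else -h))

/-- Radii `r` at the points of the base and `h` at the two apexes of a bipyramid, so that the apex
balls touch each other at the origin. -/
def bipyramidRadius (r : ι → ℝ) (h : ℝ) : ι ⊕ Bool → ℝ :=
  Sum.elim r fun _ ↦ h

variable {f : ι → E} {r : ι → ℝ} {h : ℝ}

theorem dist_bipyramidCenter_inl_inl (i j : ι) :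
    dist (bipyramidCenter f h (.inl i)) (bipyramidCenter f h (.inl j)) = dist (f i) (f j) := by
  simp [bipyramidCenter]

theorem dist_bipyramidCenter_inl_inr {i : ι} (hr : 0 ≤ r i + h)
    (hi : ‖f i‖ ^ 2 + h ^ 2 = (r i + h) ^ 2) (b : Bool) :
    dist (bipyramidCenter f h (.inl i)) (bipyramidCenter f h (.inr b)) = r i + h := by
  rw [← Real.sqrt_sq hr, ← hi]
  cases b <;> simp [bipyramidCenter, WithLp.prod_dist_eq_of_L2]

theorem dist_bipyramidCenter_inr_inr (hh : 0 ≤ h) {b b' : Bool} (hb : b ≠ b') :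
    dist (bipyramidCenter f h (.inr b)) (bipyramidCenter f h (.inr b')) = h + h := by
  cases b <;> cases b' <;>
    simp_all [bipyramidCenter, Real.dist_eq, abs_sub_comm (-h), abs_of_nonneg (add_nonneg hh hh)]

theorem IsBallPacking.bipyramid (hf : IsBallPacking f r) (hh : 0 < h)
    (hfh : ∀ i, ‖f i‖ ^ 2 + h ^ 2 = (r i + h) ^ 2) :
    IsBallPacking (bipyramidCenter f h) (bipyramidRadius r h) where
  radius_pos
    | .inl i => hf.radius_pos i
    | .inr _ => hh
  add_le_dist
    | .inl i, .inl j, hij =>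
      (hf.add_le_dist i j (by simpa using hij)).trans_eq (dist_bipyramidCenter_inl_inl i j).symm
    | .inl i, .inr b, _ =>
      (dist_bipyramidCenter_inl_inr (add_pos (hf.radius_pos i) hh).le (hfh i) b).ge
    | .inr b, .inl i, _ => by
      rw [dist_comm, add_comm]
      exact (dist_bipyramidCenter_inl_inr (add_pos (hf.radius_pos i) hh).le (hfh i) b).ge
    | .inr b, .inr b', hb => (dist_bipyramidCenter_inr_inr hh.le (by simpa using hb)).ge

theorem colorable_contactGraph_of_colorable_bipyramid (hf : ∀ i, 0 < r i) (hh : 0 < h)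
    (hfh : ∀ i, ‖f i‖ ^ 2 + h ^ 2 = (r i + h) ^ 2) {n : ℕ}
    (hn : (contactGraph (bipyramidCenter f h) (bipyramidRadius r h)).Colorable (n + 2)) :
    (contactGraph f r).Colorable n := by
  let base : contactGraph f r →g contactGraph (bipyramidCenter f h) (bipyramidRadius r h) :=
    ⟨Sum.inl, fun {i j} hij ↦
      ⟨Sum.inl_injective.ne hij.1, (dist_bipyramidCenter_inl_inl i j).trans hij.2⟩⟩
  let apexes : Finset (ι ⊕ Bool) := Finset.univ.map .inr
  have hclique : (contactGraph (bipyramidCenter f h) (bipyramidRadius r h)).IsClique apexes := by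
    intro v hv w hw hvw
    simp only [apexes, Finset.coe_map, Finset.coe_univ, Set.image_univ] at hv hw
    obtain ⟨⟨b, rfl⟩, ⟨b', rfl⟩⟩ := And.intro hv hw
    exact ⟨hvw, dist_bipyramidCenter_inr_inr hh.le (by simpa using hvw)⟩
  refine colorable_of_colorable_add_card base hclique (fun i w hw ↦ ?_) hn
  obtain ⟨b, -, rfl⟩ := Finset.mem_map.1 hw
  exact ⟨Sum.inl_ne_inr, dist_bipyramidCenter_inl_inr (add_pos (hf i) hh).le (hfh i) b⟩

theorem exists_ball_packing_chromaticNumber_eq_add_three [Finite ι] [InnerProductSpace ℝ E]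
    [FiniteDimensional ℝ E] {a ρ : ℝ} (hf : IsBallPacking f fun _ ↦ ρ) (hρ : 0 < ρ)
    (hfa : ∀ i, ‖f i‖ ^ 2 = a) (hρa : ρ ^ 2 < a) {n d : ℕ} (hd : Module.finrank ℝ E = d)
    (hn : ¬(contactGraph f fun _ ↦ ρ).Colorable n) :
    ∃ (m : ℕ) (c : Fin m → EuclideanSpace ℝ (Fin (d + 1))) (r : Fin m → ℝ),
      IsBallPacking c r ∧ (tangencyGraph c r).chromaticNumber = (n + 3 : ℕ) := by
  let h : ℝ := (a - ρ ^ 2) / (2 * ρ)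
  have hh : 0 < h := div_pos (sub_pos.2 hρa) (by positivity)
  have hfh (i : ι) : ‖f i‖ ^ 2 + h ^ 2 = (ρ + h) ^ 2 := by
    rw [hfa]
    simp only [h]
    field_simp
    ring
  have hdim : Module.finrank ℝ (WithLp 2 (E × ℝ)) = d + 1 := by
    rw [(WithLp.linearEquiv 2 ℝ (E × ℝ)).finrank_eq, Module.finrank_prod, hd, Module.finrank_self]
  exact exists_ball_packing_chromaticNumber_eq_succ (hf.bipyramid hh hfh) hdim fun hcol ↦
    hn (colorable_contactGraph_of_colorable_bipyramid (fun _ ↦ hρ) hh hfh hcol)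

end Bipyramid

section Gram

variable {V : Type*} [Fintype V]

theorem exists_inner_eq_of_isIdempotentElem {P : Matrix V V ℝ} (hsymm : P.IsSymm)
    (hidem : IsIdempotentElem P) {d : ℕ} (htrace : P.trace = d) :
    ∃ f : V → EuclideanSpace ℝ (Fin d), ∀ x y, inner ℝ (f x) (f y) = P x y := by
  classical
  let T : EuclideanSpace ℝ V →ₗ[ℝ] EuclideanSpace ℝ V := Matrix.toLpLin 2 2 P
  have hT : IsIdempotentElem T := by
    change T ∘ₗ T = T
    rw [← Matrix.toLpLin_mul, hidem.eq]
  have hrank : Module.finrank ℝ (LinearMap.range T) = d := by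
    have htraceT : LinearMap.trace ℝ _ T = d := by
      rw [← htrace, ← Matrix.trace_toLin_eq P (PiLp.basisFun 2 ℝ V), ← Matrix.toLpLin_eq_toLin]
    exact_mod_cast (LinearMap.IsIdempotentElem.isProj_range T hT).trace.symm.trans htraceT
  let φ := ((stdOrthonormalBasis ℝ (LinearMap.range T)).reindex (finCongr hrank)).repr
  let column (x : V) : LinearMap.range T :=
    ⟨T (EuclideanSpace.single x 1), LinearMap.mem_range_self _ _⟩
  refine ⟨fun x ↦ φ (column x), fun x y ↦ ?_⟩
  calc inner ℝ (φ (column x)) (φ (column y)) = ∑ z, P z x * P z y := by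
        rw [LinearIsometryEquiv.inner_map_map]
        simp [column, T, PiLp.inner_apply, Matrix.toLpLin_apply, mul_comm]
    _ = (P * P) x y := by
        simp only [Matrix.mul_apply, hsymm.apply x]
    _ = P x y := by rw [hidem.eq]

end Gram

section StronglyRegular

open Matrix

variable {V : Type*} [Fintype V] {G : SimpleGraph V} [DecidableRel G.Adj] {n k l m : ℕ} {θ τ : ℝ}

theorem adjMatrix_mul_of_one (hG : G.IsRegularOfDegree k) :
    G.adjMatrix ℝ * of 1 = (k : ℝ) • of 1 := by
  ext x y
  simp [hG.degree_eq x]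

theorem of_one_mul_adjMatrix (hG : G.IsRegularOfDegree k) :
    of 1 * G.adjMatrix ℝ = (k : ℝ) • of 1 := by
  ext x y
  simp [hG.degree_eq y]

theorem of_one_mul_of_one :
    (of 1 : Matrix V V ℝ) * of 1 = (Fintype.card V : ℝ) • of 1 := by
  ext x y
  simp [Matrix.mul_apply]

theorem adjMatrix_mul_self_of_isSRGWith [DecidableEq V] (hG : G.IsSRGWith n k l m)
    (hsum : θ + τ = l - m) (hprod : θ * τ = m - k) :
    G.adjMatrix ℝ * G.adjMatrix ℝ =
      (θ + τ) • G.adjMatrix ℝ - (θ * τ) • 1 + (m : ℝ) • of 1 := by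
  have hJ : 1 + G.adjMatrix ℝ + Gᶜ.adjMatrix ℝ = of 1 := by
    rw [← G.compl_adjMatrix_eq_adjMatrix_compl ℝ,
      G.one_add_adjMatrix_add_compl_adjMatrix_eq_of_one ℝ]
  rw [← pow_two, hG.matrix_eq, hsum, hprod, ← hJ]
  module

theorem sub_mul_sub_eq_of_isSRGWith [Nonempty V] (hG : G.IsSRGWith n k l m)
    (hsum : θ + τ = l - m) (hprod : θ * τ = m - k) : (k - θ) * (k - τ) = (m * n : ℝ) := by
  classical
  have hJ := congrArg (· * (of 1 : Matrix V V ℝ)) (adjMatrix_mul_self_of_isSRGWith hG hsum hprod)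
  simp only [Matrix.mul_assoc, adjMatrix_mul_of_one hG.regular, add_mul, sub_mul, smul_mul_assoc,
    one_mul, of_one_mul_of_one, hG.card, Matrix.mul_smul] at hJ
  obtain ⟨x⟩ := ‹Nonempty V›
  have hxx := congrFun₂ hJ x x
  simp only [Matrix.add_apply, Matrix.sub_apply, Matrix.smul_apply, of_apply, Pi.one_apply,
    smul_eq_mul] at hxx
  linear_combination hxx

section Eigenprojection

variable [DecidableEq V]

variable (G) in
/-- For a strongly regular graph with valency `k` and restricted eigenvalues `θ` and `τ`, the
orthogonal projection onto the `θ`-eigenspace of the adjacency matrix. -/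
noncomputable def eigenprojection (k : ℕ) (θ τ : ℝ) : Matrix V V ℝ :=
  (θ - τ)⁻¹ • (G.adjMatrix ℝ - τ • 1 - ((k - τ) / Fintype.card V) • of 1)

theorem eigenprojection_apply_self (x : V) :
    eigenprojection G k θ τ x x = (-τ - (k - τ) / Fintype.card V) / (θ - τ) := by
  simp [eigenprojection, div_eq_inv_mul]

theorem eigenprojection_apply_of_adj {x y : V} (h : G.Adj x y) :
    eigenprojection G k θ τ x y = (1 - (k - τ) / Fintype.card V) / (θ - τ) := by
  simp [eigenprojection, h, h.ne, div_eq_inv_mul]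

theorem eigenprojection_apply_of_not_adj {x y : V} (hne : x ≠ y) (h : ¬G.Adj x y) :
    eigenprojection G k θ τ x y = -((k - τ) / Fintype.card V) / (θ - τ) := by
  simp [eigenprojection, h, hne, div_eq_inv_mul]

theorem isSymm_eigenprojection : (eigenprojection G k θ τ).IsSymm :=
  ((G.isSymm_adjMatrix.sub (isSymm_one.smul τ)).sub
    (IsSymm.smul (A := of 1) (by rfl) ((k - τ) / Fintype.card V))).smul _

theorem trace_eigenprojection [Nonempty V] :
    (eigenprojection G k θ τ).trace = (-τ * Fintype.card V - (k - τ)) / (θ - τ) := by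
  simp only [trace, diag_apply, eigenprojection_apply_self, Finset.sum_const, Finset.card_univ,
    nsmul_eq_mul]
  field_simp

theorem isIdempotentElem_eigenprojection [Nonempty V] (hG : G.IsSRGWith n k l m)
    (hsum : θ + τ = l - m) (hprod : θ * τ = m - k) (hτθ : τ ≠ θ) :
    IsIdempotentElem (eigenprojection G k θ τ) := by
  have hn : (n : ℝ) ≠ 0 := by simp [← hG.card]
  have hθτ : θ - τ ≠ 0 := sub_ne_zero.2 hτθ.symm
  have hmn := sub_mul_sub_eq_of_isSRGWith hG hsum hprod
  simp only [IsIdempotentElem, eigenprojection, smul_mul_assoc, mul_smul_comm, mul_sub,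
    sub_mul, mul_one, one_mul, adjMatrix_mul_self_of_isSRGWith hG hsum hprod,
    adjMatrix_mul_of_one hG.regular, of_one_mul_adjMatrix hG.regular, of_one_mul_of_one, hG.card]
  match_scalars <;> field_simp
  · ring
  · ring
  · linear_combination -hmn

end Eigenprojection

theorem exists_spherical_embedding_of_isSRGWith [Nonempty V] (hG : G.IsSRGWith n k l m)
    (hsum : θ + τ = l - m) (hprod : θ * τ = m - k) (hτθ : τ < θ) {d : ℕ}
    (hd : d * (θ - τ) = -τ * n - (k - τ)) :
    ∃ f : V → EuclideanSpace ℝ (Fin d),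
      (∀ x, ‖f x‖ ^ 2 = (-τ - (k - τ) / n) / (θ - τ)) ∧
      (∀ x y, G.Adj x y → dist (f x) (f y) ^ 2 = 2 * (-τ - 1) / (θ - τ)) ∧
      (∀ x y, x ≠ y → ¬G.Adj x y → dist (f x) (f y) ^ 2 = 2 * -τ / (θ - τ)) := by
  classical
  have hpos : 0 < θ - τ := sub_pos.2 hτθ
  obtain ⟨f, hf⟩ := exists_inner_eq_of_isIdempotentElem isSymm_eigenprojection
    (isIdempotentElem_eigenprojection hG hsum hprod hτθ.ne) (d := d)
    (by rw [trace_eigenprojection, hG.card, ← hd, mul_div_cancel_right₀ _ hpos.ne'])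
  have hnorm (x : V) : ‖f x‖ ^ 2 = (-τ - (k - τ) / n) / (θ - τ) := by
    rw [← real_inner_self_eq_norm_sq, hf, eigenprojection_apply_self, hG.card]
  refine ⟨f, hnorm, fun x y hxy ↦ ?_, fun x y hne hxy ↦ ?_⟩
  · rw [dist_eq_norm, norm_sub_sq_real, hnorm, hnorm, hf, eigenprojection_apply_of_adj hxy,
      hG.card]
    ring
  · rw [dist_eq_norm, norm_sub_sq_real, hnorm, hnorm, hf, eigenprojection_apply_of_not_adj hne hxy,
      hG.card]
    ring

theorem sq_radius_lt_sq_norm_of_isSRGWith (hG : G.IsSRGWith n k l m) (hn : 2 < n) (hτ : τ < -1)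
    (hτθ : τ < θ) :
    (-τ - 1) / (2 * (θ - τ)) < (-τ - (k - τ) / n) / (θ - τ) := by
  have hpos : 0 < θ - τ := sub_pos.2 hτθ
  have hn' : (2 : ℝ) < n := by exact_mod_cast hn
  have hk : (k : ℝ) + 1 ≤ n := by
    obtain ⟨x⟩ : Nonempty V := Fintype.card_pos_iff.1 (by have := hG.card; lia)
    have hlt := G.degree_lt_card_verts x
    rw [hG.regular.degree_eq x, hG.card] at hlt
    exact_mod_cast hlt
  have hbound : 2 * (k - τ) < n * (1 - τ) := by nlinarith
  have hquot : (k - τ) / n < (1 - τ) / 2 := by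
    rw [div_lt_div_iff₀ (by linarith) two_pos]
    linarith
  rw [← div_div, div_lt_div_iff_of_pos_right hpos]
  linarith

theorem exists_ball_packing_of_isSRGWith (hG : G.IsSRGWith n k l m) (hn : 2 < n)
    (hsum : θ + τ = l - m) (hprod : θ * τ = m - k) (hτ : τ < -1) (hτθ : τ < θ) {d : ℕ}
    (hd : d * (θ - τ) = -τ * n - (k - τ)) {s : ℕ} (hs : ¬G.Colorable s) :
    ∃ (N : ℕ) (c : Fin N → EuclideanSpace ℝ (Fin (d + 1))) (r : Fin N → ℝ),
      IsBallPacking c r ∧ (tangencyGraph c r).chromaticNumber = (s + 3 : ℕ) := by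
  have hpos : 0 < θ - τ := sub_pos.2 hτθ
  have : Nonempty V := Fintype.card_pos_iff.1 (by have := hG.card; lia)
  obtain ⟨f, hnorm, hadj, hnadj⟩ := exists_spherical_embedding_of_isSRGWith hG hsum hprod hτθ hd
  let ρ : ℝ := √((-τ - 1) / (2 * (θ - τ)))
  have hρ : 0 < ρ := Real.sqrt_pos.2 (div_pos (by linarith) (by linarith))
  have hρsq : ρ ^ 2 = (-τ - 1) / (2 * (θ - τ)) :=
    Real.sq_sqrt (div_nonneg (by linarith) (by linarith))
  have hdiam : (ρ + ρ) ^ 2 = 2 * (-τ - 1) / (θ - τ) := by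
    rw [← two_mul, mul_pow, hρsq]
    field_simp
  have htangent (x y : V) (h : G.Adj x y) : dist (f x) (f y) = ρ + ρ :=
    (sq_eq_sq₀ dist_nonneg (by positivity)).1 ((hadj x y h).trans hdiam.symm)
  have hdisjoint (x y : V) (hne : x ≠ y) (h : ¬G.Adj x y) : ρ + ρ < dist (f x) (f y) := by
    refine lt_of_pow_lt_pow_left₀ 2 dist_nonneg ?_
    rw [hdiam, hnadj x y hne h, div_lt_div_iff_of_pos_right hpos]
    linarith
  have hpacking : IsBallPacking f fun _ ↦ ρ := by
    refine ⟨fun _ ↦ hρ, fun x y hne ↦ ?_⟩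
    by_cases h : G.Adj x y
    · exact (htangent x y h).ge
    · exact (hdisjoint x y hne h).le
  have hle : G ≤ contactGraph f fun _ ↦ ρ := fun x y h ↦ ⟨h.ne, htangent x y h⟩
  exact exists_ball_packing_chromaticNumber_eq_add_three hpacking hρ hnorm
    (hρsq ▸ sq_radius_lt_sq_norm_of_isSRGWith hG hn hτ hτθ) finrank_euclideanSpace_fin
    fun hcol ↦ hs (hcol.mono_left hle)

end StronglyRegular

section Counting

theorem ncard_setOf_and_add_ncard_setOf_and_not {α : Type*} [Finite α] (p r : α → Prop) :
    {z | p z ∧ r z}.ncard + {z | p z ∧ ¬r z}.ncard = {z | p z}.ncard :=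
  Set.ncard_inter_add_ncard_sdiff_eq_ncard {z | p z} {z | r z}

variable {F V : Type*} [Field F] [AddCommGroup V] [Module F V]

theorem ncard_setOf_and_eq_mul_card (x : V) {p : V → Prop} (hp : ∀ z (t : F), p z → p (z + t • x))
    {g : V → F} (hg : ∀ z, p z → Function.Bijective fun t : F ↦ g (z + t • x)) (a : F) :
    {z | p z ∧ g z = a}.ncard * Nat.card F = {z | p z}.ncard := by
  let shift (w : {z | p z ∧ g z = a} × F) : {z | p z} := ⟨w.1 + w.2 • x, hp _ _ w.1.2.1⟩
  have hinj : Function.Injective shift := by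
    rintro ⟨⟨z, hz, hza⟩, t⟩ ⟨⟨z', hz', hza'⟩, t'⟩ h
    have hsum : z + t • x = z' + t' • x := congrArg Subtype.val h
    have hz'z : z' = z + (t - t') • x := by
      rw [sub_smul, ← add_sub_assoc, hsum, add_sub_cancel_right]
    have ht : t - t' = 0 := (hg z hz).1 <| by
      change g (z + (t - t') • x) = g (z + (0 : F) • x)
      rw [← hz'z, zero_smul, add_zero, hza, hza']
    obtain rfl : t = t' := sub_eq_zero.1 ht
    simpa using hsum
  have hsurj : Function.Surjective shift := by
    rintro ⟨z, hz⟩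
    obtain ⟨t, ht⟩ := (hg z hz).2 a
    exact ⟨⟨⟨z + t • x, hp z t hz, ht⟩, -t⟩, Subtype.ext (by simp [shift])⟩
  rw [← Nat.card_coe_set_eq, ← Nat.card_coe_set_eq, ← Nat.card_prod]
  exact Nat.card_congr (Equiv.ofBijective shift ⟨hinj, hsurj⟩)

theorem ncard_setOf_and_ne_mul_card [Finite V] (x : V) {p : V → Prop}
    (hp : ∀ z (t : F), p z → p (z + t • x)) {g : V → F}
    (hg : ∀ z, p z → Function.Bijective fun t : F ↦ g (z + t • x)) (a : F) :
    {z | p z ∧ g z ≠ a}.ncard * Nat.card F = {z | p z}.ncard * (Nat.card F - 1) := by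
  have heq := ncard_setOf_and_eq_mul_card x hp hg a
  have hsplit := ncard_setOf_and_add_ncard_setOf_and_not p (g · = a)
  have hne : {z | p z ∧ g z ≠ a}.ncard = {z | p z ∧ g z = a}.ncard * (Nat.card F - 1) := by
    rw [Nat.mul_sub_one, heq, ← hsplit, Nat.add_sub_cancel_left]
  rw [hne, ← heq, mul_right_comm]

theorem bijective_add_mul {c : F} (hc : c ≠ 0) (b : F) : Function.Bijective fun t ↦ b + t * c :=
  (Equiv.addLeft b).bijective.comp (Equiv.mulRight₀ c hc).bijective

end Counting

section Singular

open QuadraticMap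

variable {F V : Type*} [Field F] [AddCommGroup V] [Module F V] {Q : QuadraticForm F V} {x y : V}

theorem polar_self_of_eq_zero (hx : Q x = 0) : polar Q x x = 0 := by
  rw [polar_self, hx, smul_zero]

theorem map_add_smul_of_eq_zero (hx : Q x = 0) (z : V) (t : F) :
    Q (z + t • x) = Q z + t * polar Q x z := by
  rw [QuadraticMap.map_add Q, QuadraticMap.map_smul, hx, smul_zero, add_zero, polar_smul_right,
    polar_comm, smul_eq_mul]

theorem exists_polar_ne_zero (hQ : Q.radical = ⊥) (hx : Q x = 0) (hx0 : x ≠ 0) :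
    ∃ w, polar Q x w ≠ 0 := by
  by_contra! h
  have hmem : x ∈ Q.radical := mem_radical_iff'.2 ⟨hx, fun z ↦ by
    rw [QuadraticMap.map_add Q, hx, h z, zero_add, add_zero]⟩
  exact hx0 (by simpa [hQ] using hmem)

theorem exists_polar_eq_zero_and_polar_ne_zero (hQ : Q.radical = ⊥) (hx : Q x = 0) (hy : Q y = 0)
    (hxy : polar Q x y = 0) (hind : LinearIndependent F ![x, y]) :
    ∃ w, polar Q x w = 0 ∧ polar Q y w ≠ 0 := by
  by_contra! h
  obtain ⟨c, hc⟩ : ∃ c : F, c • polarBilin Q x = polarBilin Q y := by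
    rw [← Submodule.mem_span_singleton]
    simpa using mem_span_of_iInf_ker_le_ker (ι := Unit) (L := fun _ ↦ polarBilin Q x)
      (K := polarBilin Q y) (by simpa [SetLike.le_def] using h)
  have hsing : Q (y + -c • x) = 0 := by
    rw [map_add_smul_of_eq_zero hx, hy, hxy, mul_zero, add_zero]
  have hne : y + -c • x ≠ 0 := fun h0 ↦ by
    have := LinearIndependent.pair_iff.1 hind (-c) 1 (by rwa [one_smul, add_comm])
    exact one_ne_zero this.2
  obtain ⟨w, hw⟩ := exists_polar_ne_zero hQ hsing hne
  have hcw : c * polar Q x w = polar Q y w := by simpa using LinearMap.congr_fun hc w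
  exact hw (by simp [polar_add_left, polar_smul_left, ← hcw])

variable [Finite V]

theorem ncard_polar_ne_zero_mul_card (hw : ∃ w, polar Q x w ≠ 0) :
    {z | polar Q x z ≠ 0}.ncard * Nat.card F = Nat.card V * (Nat.card F - 1) := by
  obtain ⟨w, hw⟩ := hw
  have h := ncard_setOf_and_ne_mul_card w (p := fun _ ↦ True) (fun _ _ _ ↦ trivial)
    (g := fun z ↦ polar Q x z)
    (fun z _ ↦ by simpa [polar_add_right, polar_smul_right] using bijective_add_mul hw _) 0
  simpa using h

theorem ncard_polar_ne_zero_and_singular_mul_card_sq (hx : Q x = 0) (hw : ∃ w, polar Q x w ≠ 0) :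
    {z | polar Q x z ≠ 0 ∧ Q z = 0}.ncard * Nat.card F ^ 2 = Nat.card V * (Nat.card F - 1) := by
  have h : {z | polar Q x z ≠ 0 ∧ Q z = 0}.ncard * Nat.card F = {z | polar Q x z ≠ 0}.ncard :=
    ncard_setOf_and_eq_mul_card x
      (fun z t hz ↦ by simpa [polar_add_right, polar_smul_right, polar_self_of_eq_zero hx] using hz)
      (fun z hz ↦ by simpa only [map_add_smul_of_eq_zero hx] using bijective_add_mul hz _) 0
  rw [pow_two, ← mul_assoc, h, ncard_polar_ne_zero_mul_card hw]

theorem ncard_polar_ne_zero_polar_ne_zero_and_singular_mul_card_cube (hx : Q x = 0)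
    (hxy : polar Q x y = 0) (hw : ∃ w, polar Q x w ≠ 0)
    (hw' : ∃ w, polar Q x w = 0 ∧ polar Q y w ≠ 0) :
    {z | (polar Q x z ≠ 0 ∧ polar Q y z ≠ 0) ∧ Q z = 0}.ncard * Nat.card F ^ 3 =
      Nat.card V * (Nat.card F - 1) ^ 2 := by
  obtain ⟨w, hxw, hyw⟩ := hw'
  have hsing : {z | (polar Q x z ≠ 0 ∧ polar Q y z ≠ 0) ∧ Q z = 0}.ncard * Nat.card F =
      {z | polar Q x z ≠ 0 ∧ polar Q y z ≠ 0}.ncard :=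
    ncard_setOf_and_eq_mul_card x
      (fun z t hz ↦ by
        simpa [polar_add_right, polar_smul_right, polar_self_of_eq_zero hx, polar_comm Q y x, hxy]
          using hz)
      (fun z hz ↦ by simpa only [map_add_smul_of_eq_zero hx] using bijective_add_mul hz.1 _) 0
  have hpolar : {z | polar Q x z ≠ 0 ∧ polar Q y z ≠ 0}.ncard * Nat.card F =
      {z | polar Q x z ≠ 0}.ncard * (Nat.card F - 1) :=
    ncard_setOf_and_ne_mul_card w
      (fun z t hz ↦ by simpa [polar_add_right, polar_smul_right, hxw] using hz)
      (fun z _ ↦ by simpa [polar_add_right, polar_smul_right] using bijective_add_mul hyw _) 0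
  rw [pow_succ', ← mul_assoc, hsing, pow_two, ← mul_assoc, hpolar, mul_right_comm,
    ncard_polar_ne_zero_mul_card hw, mul_assoc, ← pow_two]

theorem ncard_polar_ne_zero_polar_ne_zero_and_singular_add (hx : Q x = 0)
    (hxy : polar Q x y ≠ 0) :
    {z | (polar Q x z ≠ 0 ∧ polar Q y z ≠ 0) ∧ Q z = 0}.ncard * Nat.card F +
        {z | polar Q x z = 0 ∧ Q z = 0}.ncard * (Nat.card F - 1) =
      {z | polar Q y z ≠ 0 ∧ Q z = 0}.ncard * Nat.card F := by
  have hcone : {z | (polar Q x z = 0 ∧ Q z = 0) ∧ polar Q y z ≠ 0}.ncard * Nat.card F =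
      {z | polar Q x z = 0 ∧ Q z = 0}.ncard * (Nat.card F - 1) :=
    ncard_setOf_and_ne_mul_card x
      (fun z t hz ↦ by
        simp [polar_add_right, polar_smul_right, polar_self_of_eq_zero hx,
          map_add_smul_of_eq_zero hx, hz.1, hz.2])
      (fun z _ ↦ by
        simpa [polar_add_right, polar_smul_right] using
          bijective_add_mul (polar_comm Q x y ▸ hxy) _) 0
  have hsplit : {z | (polar Q x z = 0 ∧ Q z = 0) ∧ polar Q y z ≠ 0}.ncard +
      {z | (polar Q x z ≠ 0 ∧ polar Q y z ≠ 0) ∧ Q z = 0}.ncard =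
      {z | polar Q y z ≠ 0 ∧ Q z = 0}.ncard := by
    rw [← ncard_setOf_and_add_ncard_setOf_and_not (fun z ↦ polar Q y z ≠ 0 ∧ Q z = 0)
      (polar Q x · = 0)]
    simp only [and_comm, and_left_comm, and_assoc, ne_eq]
  rw [← hcone, ← hsplit, add_mul, add_comm]

end Singular

section Quadric

open QuadraticMap
open scoped LinearAlgebra.Projectivization

variable {F V : Type*} [Field F] [AddCommGroup V] [Module F V]

theorem ncard_setOf_rep_mul_card_sub_one {P : V → Prop}
    (hP : ∀ (a : Fˣ) v, P v → P (a • v)) :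
    {p : ℙ F V | P p.rep}.ncard * (Nat.card F - 1) = {v | v ≠ 0 ∧ P v}.ncard := by
  let scale (w : {p : ℙ F V | P p.rep} × Fˣ) : {v | v ≠ 0 ∧ P v} :=
    ⟨w.2 • w.1.1.rep, (smul_ne_zero_iff_ne _).2 w.1.1.rep_nonzero, hP _ _ w.1.2⟩
  have hinj : Function.Injective scale := by
    rintro ⟨⟨p, hp⟩, a⟩ ⟨⟨p', hp'⟩, a'⟩ h
    have hsmul : a • p.rep = a' • p'.rep := congrArg Subtype.val h
    obtain rfl : p = p' := by
      rw [← p.mk_rep, ← p'.mk_rep, Projectivization.mk_eq_mk_iff]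
      exact ⟨a⁻¹ * a', by rw [mul_smul, ← hsmul, inv_smul_smul]⟩
    obtain rfl : a = a' := Units.ext (smul_left_injective F p.rep_nonzero hsmul)
    rfl
  have hsurj : Function.Surjective scale := by
    rintro ⟨v, hv, hPv⟩
    obtain ⟨a, ha⟩ := Projectivization.exists_smul_eq_mk_rep F v hv
    exact ⟨⟨⟨Projectivization.mk F v hv, (ha ▸ hP a v hPv : P _)⟩, a⁻¹⟩,
      Subtype.ext (inv_smul_eq_iff.2 ha.symm)⟩
  rw [← Nat.card_units, ← Nat.card_coe_set_eq, ← Nat.card_coe_set_eq, ← Nat.card_prod]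
  exact Nat.card_congr (Equiv.ofBijective scale ⟨hinj, hsurj⟩)

/-- The points of the projective quadric `Q = 0`. -/
abbrev QuadricPoint (Q : QuadraticForm F V) : Type _ :=
  {p : ℙ F V // Q p.rep = 0}

/-- The graph on the points of the quadric `Q = 0` in which two points are adjacent when they are
not orthogonal for the polar form, i.e. when the line through them is not contained in the
quadric. -/
def nonorthogonalityGraph (Q : QuadraticForm F V) : SimpleGraph (QuadricPoint Q) where
  Adj x y := polar Q x.1.rep y.1.rep ≠ 0
  symm := ⟨fun _ _ h ↦ by rwa [polar_comm]⟩
  loopless := ⟨fun x h ↦ h (polar_self_of_eq_zero x.2)⟩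

variable {Q : QuadraticForm F V}

theorem map_units_smul_eq_zero_iff (a : Fˣ) (v : V) : Q (a • v) = 0 ↔ Q v = 0 := by
  simp [Units.smul_def, QuadraticMap.map_smul]

theorem polar_units_smul_right_eq_zero_iff (a : Fˣ) (x v : V) :
    polar Q x (a • v) = 0 ↔ polar Q x v = 0 := by
  simp [Units.smul_def, polar_smul_right]

theorem ncard_quadricPoint_setOf_rep_mul_card_sub_one {P : V → Prop}
    (hP : ∀ (a : Fˣ) v, P v → P (a • v)) :
    {x : QuadricPoint Q | P x.1.rep}.ncard * (Nat.card F - 1) =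
      {v | v ≠ 0 ∧ P v ∧ Q v = 0}.ncard := by
  rw [← ncard_setOf_rep_mul_card_sub_one fun a v hv ↦
    ⟨hP a v hv.1, (map_units_smul_eq_zero_iff a v).2 hv.2⟩,
    ← Set.ncard_image_of_injective _ Subtype.val_injective]
  congr 2
  ext p
  simp

theorem card_quadricPoint_mul_card_sub_one_add_one [Finite V] (Q : QuadraticForm F V) :
    Nat.card (QuadricPoint Q) * (Nat.card F - 1) + 1 = {v | Q v = 0}.ncard := by
  have h := ncard_quadricPoint_setOf_rep_mul_card_sub_one (Q := Q) (P := fun _ ↦ True)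
    fun _ _ _ ↦ trivial
  have hset : {v | v ≠ 0 ∧ True ∧ Q v = 0} = {v | Q v = 0} \ {0} := by
    ext v
    simp [and_comm]
  rw [hset] at h
  rw [← Set.ncard_sdiff_singleton_add_one (s := {v | Q v = 0}) (a := 0) Q.map_zero, ← h,
    Set.ofPred_true, Set.ncard_univ]

theorem ncard_neighborSet_mul_card_sub_one (x : QuadricPoint Q) :
    ((nonorthogonalityGraph Q).neighborSet x).ncard * (Nat.card F - 1) =
      {v | polar Q x.1.rep v ≠ 0 ∧ Q v = 0}.ncard := by
  refine (ncard_quadricPoint_setOf_rep_mul_card_sub_one (P := fun v ↦ polar Q x.1.rep v ≠ 0)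
    fun a v ↦ (polar_units_smul_right_eq_zero_iff a _ v).not.2).trans ?_
  congr 1
  ext v
  simp +contextual [ne_of_apply_ne (polar Q x.1.rep)]

theorem ncard_commonNeighbors_mul_card_sub_one (x y : QuadricPoint Q) :
    ((nonorthogonalityGraph Q).commonNeighbors x y).ncard * (Nat.card F - 1) =
      {v | (polar Q x.1.rep v ≠ 0 ∧ polar Q y.1.rep v ≠ 0) ∧ Q v = 0}.ncard := by
  refine (ncard_quadricPoint_setOf_rep_mul_card_sub_one
    (P := fun v ↦ polar Q x.1.rep v ≠ 0 ∧ polar Q y.1.rep v ≠ 0) fun a v ↦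
      And.imp (polar_units_smul_right_eq_zero_iff a _ v).not.2
        (polar_units_smul_right_eq_zero_iff a _ v).not.2).trans ?_
  congr 1
  ext v
  simp +contextual [ne_of_apply_ne (polar Q x.1.rep)]

variable [Finite F] [Finite V]

theorem ncard_neighborSet_mul_card_sq (hQ : Q.radical = ⊥) (x : QuadricPoint Q) :
    ((nonorthogonalityGraph Q).neighborSet x).ncard * Nat.card F ^ 2 = Nat.card V := by
  have hpos : 0 < Nat.card F - 1 := Nat.sub_pos_of_lt Finite.one_lt_card
  refine Nat.eq_of_mul_eq_mul_right hpos ?_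
  rw [mul_right_comm, ncard_neighborSet_mul_card_sub_one,
    ncard_polar_ne_zero_and_singular_mul_card_sq x.2
      (exists_polar_ne_zero hQ x.2 x.1.rep_nonzero)]

theorem ncard_commonNeighbors_mul_card_cube_of_not_adj (hQ : Q.radical = ⊥) {x y : QuadricPoint Q}
    (hne : x ≠ y) (hxy : ¬(nonorthogonalityGraph Q).Adj x y) :
    ((nonorthogonalityGraph Q).commonNeighbors x y).ncard * Nat.card F ^ 3 =
      Nat.card V * (Nat.card F - 1) := by
  have hpos : 0 < Nat.card F - 1 := Nat.sub_pos_of_lt Finite.one_lt_card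
  have hind : LinearIndependent F ![x.1.rep, y.1.rep] :=
    Projectivization.linearIndependent_pair_iff_ne.2 (Subtype.val_injective.ne hne)
  have horth : polar Q x.1.rep y.1.rep = 0 := not_not.1 hxy
  refine Nat.eq_of_mul_eq_mul_right hpos ?_
  rw [mul_right_comm, ncard_commonNeighbors_mul_card_sub_one,
    ncard_polar_ne_zero_polar_ne_zero_and_singular_mul_card_cube x.2 horth
      (exists_polar_ne_zero hQ x.2 x.1.rep_nonzero)
      (exists_polar_eq_zero_and_polar_ne_zero hQ x.2 y.2 horth hind), pow_two, mul_assoc]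

theorem ncard_commonNeighbors_mul_card_cube_add_of_adj (hQ : Q.radical = ⊥) {x y : QuadricPoint Q}
    (hxy : (nonorthogonalityGraph Q).Adj x y) :
    ((nonorthogonalityGraph Q).commonNeighbors x y).ncard * Nat.card F ^ 3 +
        {v | Q v = 0}.ncard * Nat.card F ^ 2 = Nat.card V * (2 * Nat.card F - 1) := by
  have hpos : 0 < Nat.card F - 1 := Nat.sub_pos_of_lt Finite.one_lt_card
  have hx := ncard_neighborSet_mul_card_sq hQ x
  have hy := ncard_neighborSet_mul_card_sq hQ y
  set q := Nat.card F
  set common := ((nonorthogonalityGraph Q).commonNeighbors x y).ncard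
  set degX := ((nonorthogonalityGraph Q).neighborSet x).ncard
  set degY := ((nonorthogonalityGraph Q).neighborSet y).ncard
  set cone := {v | polar Q x.1.rep v = 0 ∧ Q v = 0}.ncard
  have hsplit : cone + degX * (q - 1) = {v | Q v = 0}.ncard := by
    rw [ncard_neighborSet_mul_card_sub_one,
      ← ncard_setOf_and_add_ncard_setOf_and_not (Q · = 0) (polar Q x.1.rep · = 0)]
    simp only [cone, and_comm, ne_eq]
  have hcommon : common * q + cone = degY * q := by
    refine Nat.eq_of_mul_eq_mul_right hpos ?_
    rw [add_mul, mul_right_comm, mul_right_comm degY, ncard_commonNeighbors_mul_card_sub_one,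
      ncard_neighborSet_mul_card_sub_one,
      ncard_polar_ne_zero_polar_ne_zero_and_singular_add x.2 hxy]
  calc common * q ^ 3 + {v | Q v = 0}.ncard * q ^ 2
      = (common * q + cone) * q ^ 2 + degX * q ^ 2 * (q - 1) := by rw [← hsplit]; ring
    _ = degY * q ^ 2 * q + degX * q ^ 2 * (q - 1) := by rw [hcommon, mul_right_comm]
    _ = Nat.card V * (q + (q - 1)) := by rw [hx, hy, mul_add]
    _ = Nat.card V * (2 * q - 1) := by congr 1; lia

end Quadric

section EllipticQuadric

open QuadraticMap

variable {F V : Type*} [Field F] [AddCommGroup V] [Module F V]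

/-- `Q` is a nondegenerate quadratic form of minus type on a six-dimensional space over a finite
field, so that `Q = 0` is the elliptic quadric `Q⁻(5, q)`; the type is encoded by the number
`q⁵ - q³ + q²` of singular vectors. -/
structure IsEllipticForm (Q : QuadraticForm F V) : Prop where
  radical_eq_bot : Q.radical = ⊥
  card_eq : Nat.card V = Nat.card F ^ 6
  ncard_singular_add : {v | Q v = 0}.ncard + Nat.card F ^ 3 = Nat.card F ^ 5 + Nat.card F ^ 2

namespace IsEllipticForm

variable [Finite F] [Finite V] {Q : QuadraticForm F V}

theorem card_quadricPoint (hQ : IsEllipticForm Q) :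
    Nat.card (QuadricPoint Q) = (Nat.card F + 1) * (Nat.card F ^ 3 + 1) := by
  have hsing := hQ.ncard_singular_add
  rw [← card_quadricPoint_mul_card_sub_one_add_one] at hsing
  obtain ⟨r, hr⟩ : ∃ r, Nat.card F = r + 2 := Nat.exists_eq_add_of_le' Finite.one_lt_card
  rw [hr, show r + 2 - 1 = r + 1 from rfl] at hsing
  rw [hr]
  refine Nat.eq_of_mul_eq_mul_right (Nat.add_one_pos r) ?_
  linear_combination hsing

theorem ncard_neighborSet (hQ : IsEllipticForm Q) (x : QuadricPoint Q) :
    ((nonorthogonalityGraph Q).neighborSet x).ncard = Nat.card F ^ 4 := by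
  refine Nat.eq_of_mul_eq_mul_right (pow_pos (Nat.card_pos (α := F)) 2) ?_
  rw [ncard_neighborSet_mul_card_sq hQ.radical_eq_bot, hQ.card_eq, ← pow_add]

theorem ncard_commonNeighbors_of_not_adj (hQ : IsEllipticForm Q) {x y : QuadricPoint Q}
    (hne : x ≠ y) (hxy : ¬(nonorthogonalityGraph Q).Adj x y) :
    ((nonorthogonalityGraph Q).commonNeighbors x y).ncard = Nat.card F ^ 3 * (Nat.card F - 1) := by
  refine Nat.eq_of_mul_eq_mul_right (pow_pos (Nat.card_pos (α := F)) 3) ?_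
  rw [ncard_commonNeighbors_mul_card_cube_of_not_adj hQ.radical_eq_bot hne hxy, hQ.card_eq]
  ring

theorem ncard_commonNeighbors_of_adj (hQ : IsEllipticForm Q) {x y : QuadricPoint Q}
    (hxy : (nonorthogonalityGraph Q).Adj x y) :
    ((nonorthogonalityGraph Q).commonNeighbors x y).ncard =
      Nat.card F * (Nat.card F - 1) * (Nat.card F ^ 2 + 1) := by
  have hcommon := ncard_commonNeighbors_mul_card_cube_add_of_adj hQ.radical_eq_bot hxy
  have hsing := hQ.ncard_singular_add
  rw [hQ.card_eq] at hcommon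
  refine Nat.eq_of_mul_eq_mul_right (pow_pos (Nat.card_pos (α := F)) 3) ?_
  obtain ⟨r, hr⟩ : ∃ r, Nat.card F = r + 1 := Nat.exists_eq_add_of_le' Nat.card_pos
  rw [hr] at hsing
  rw [hr, show 2 * (r + 1) - 1 = 2 * r + 1 from rfl] at hcommon
  rw [hr, Nat.add_sub_cancel]
  linear_combination hcommon - (r + 1) ^ 2 * hsing

theorem isSRGWith [Fintype (QuadricPoint Q)] [DecidableRel (nonorthogonalityGraph Q).Adj]
    (hQ : IsEllipticForm Q) :
    (nonorthogonalityGraph Q).IsSRGWith ((Nat.card F + 1) * (Nat.card F ^ 3 + 1)) (Nat.card F ^ 4)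
      (Nat.card F * (Nat.card F - 1) * (Nat.card F ^ 2 + 1))
      (Nat.card F ^ 3 * (Nat.card F - 1)) where
  card := by rw [← Nat.card_eq_fintype_card, hQ.card_quadricPoint]
  regular x := by
    rw [← SimpleGraph.card_neighborSet_eq_degree, ← Nat.card_eq_fintype_card,
      Nat.card_coe_set_eq, hQ.ncard_neighborSet]
  of_adj x y hxy := by
    rw [← Nat.card_eq_fintype_card, Nat.card_coe_set_eq, hQ.ncard_commonNeighbors_of_adj hxy]
  of_not_adj x y hne hxy := by
    rw [← Nat.card_eq_fintype_card, Nat.card_coe_set_eq,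
      hQ.ncard_commonNeighbors_of_not_adj hne hxy]

theorem card_le_of_isIndepSet {s : Finset (QuadricPoint Q)} (hQ : IsEllipticForm Q)
    (hs : (nonorthogonalityGraph Q).IsIndepSet s) : s.card ≤ Nat.card F + 1 := by
  classical
  have := Fintype.ofFinite (QuadricPoint Q)
  obtain hcard | hcard := le_or_gt s.card 1
  · lia
  have h := card_le_of_isIndepSet_of_isSRGWith hQ.isSRGWith hs hcard
  obtain ⟨r, hr⟩ : ∃ r, Nat.card F = r + 1 := Nat.exists_eq_add_of_le' Nat.card_pos
  have hparam : 2 * (r + 1) ^ 4 - (r + 1) ^ 3 * r = (r + 2) * (r + 1) ^ 3 :=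
    Nat.sub_eq_of_eq_add (by ring)
  rw [hr, Nat.add_sub_cancel, hparam] at h
  rw [hr]
  linarith

theorem not_colorable (hQ : IsEllipticForm Q) :
    ¬(nonorthogonalityGraph Q).Colorable (Nat.card F ^ 3) := by
  have := Fintype.ofFinite (QuadricPoint Q)
  intro h
  have hle := card_le_mul_of_colorable (fun _ ↦ hQ.card_le_of_isIndepSet) h
  rw [← Nat.card_eq_fintype_card, hQ.card_quadricPoint] at hle
  lia

end IsEllipticForm

end EllipticQuadric

section EllipticForm

open QuadraticMap

variable {F V : Type*} [Field F] [AddCommGroup V] [Module F V]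

variable (F) in
/-- The hyperbolic plane: the quadratic form `(a, b) ↦ a * b` on `F × F`. -/
def hyperbolicPlane : QuadraticForm F (F × F) :=
  linMulLin (LinearMap.fst F F F) (LinearMap.snd F F F)

theorem polar_hyperbolicPlane (v w : F × F) :
    polar (hyperbolicPlane F) v w = v.1 * w.2 + v.2 * w.1 := by
  simp only [polar, hyperbolicPlane, linMulLin_apply, LinearMap.fst_apply, LinearMap.snd_apply,
    Prod.fst_add, Prod.snd_add]
  ring

theorem radical_hyperbolicPlane_prod_eq_bot {Q : QuadraticForm F V} (hQ : Q.radical = ⊥) :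
    ((hyperbolicPlane F).prod Q).radical = ⊥ := by
  refine (Submodule.eq_bot_iff _).2 ?_
  rintro ⟨⟨a, b⟩, w⟩ hv
  obtain ⟨hzero, hadd⟩ := mem_radical_iff'.1 hv
  replace hzero : a * b + Q w = 0 := hzero
  replace hadd (a' b' : F) (w' : V) : (a + a') * (b + b') + Q (w + w') = a' * b' + Q w' :=
    hadd ((a', b'), w')
  obtain rfl : b = 0 := by
    have h := hadd 1 0 0
    simp only [add_zero, mul_zero, map_zero] at h
    linear_combination h - hzero
  obtain rfl : a = 0 := by
    have h := hadd 0 1 0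
    simp only [add_zero, zero_add, mul_one, map_zero] at h
    linear_combination h - hzero
  have hw : w ∈ Q.radical :=
    mem_radical_iff'.2 ⟨by simpa using hzero, fun w' ↦ by simpa using hadd 0 0 w'⟩
  obtain rfl : w = 0 := by simpa [hQ] using hw
  rfl

theorem ncard_singular_hyperbolicPlane_prod [Finite F] [Finite V] (Q : QuadraticForm F V) :
    {v | ((hyperbolicPlane F).prod Q) v = 0}.ncard =
      Nat.card F * {w | Q w = 0}.ncard + Nat.card V * (Nat.card F - 1) := by
  set P := (hyperbolicPlane F).prod Q
  have hP (v : (F × F) × V) : P v = v.1.1 * v.1.2 + Q v.2 := rfl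
  let x : (F × F) × V := ((0, 1), 0)
  have hx : P x = 0 := by simp [x, hP]
  have hpolar (v : (F × F) × V) : polar P x v = v.1.1 := by
    simp [P, x, polar_prod, polar_hyperbolicPlane]
  have horth : {v | P v = 0 ∧ polar P x v = 0} = ({0} ×ˢ Set.univ) ×ˢ {w | Q w = 0} := by
    ext ⟨⟨a, b⟩, w⟩
    simp +contextual [hP, hpolar, and_comm]
  have hnonorth : {v | P v = 0 ∧ polar P x v ≠ 0}.ncard = Nat.card V * (Nat.card F - 1) := by
    have h := ncard_polar_ne_zero_and_singular_mul_card_sq hx ⟨((1, 0), 0), by simp [hpolar]⟩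
    refine Nat.eq_of_mul_eq_mul_right (pow_pos (Nat.card_pos (α := F)) 2) ?_
    simp only [and_comm (a := P _ = 0)]
    rw [h, Nat.card_prod, Nat.card_prod]
    ring
  rw [← ncard_setOf_and_add_ncard_setOf_and_not (P · = 0) (polar P x · = 0), hnonorth, horth,
    Set.ncard_prod, Set.ncard_prod, Set.ncard_singleton, Set.ncard_univ, one_mul]

theorem radical_eq_bot_of_anisotropic {Q : QuadraticForm F V} (hQ : Q.Anisotropic) :
    Q.radical = ⊥ :=
  (Submodule.eq_bot_iff _).2 fun v hv ↦ hQ v (mem_radical_iff'.1 hv).1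

theorem ncard_singular_of_anisotropic {Q : QuadraticForm F V} (hQ : Q.Anisotropic) :
    {v | Q v = 0}.ncard = 1 := by
  rw [← Set.ncard_singleton (0 : V)]
  congr
  ext v
  exact hQ.eq_zero_iff

theorem exists_forall_sq_sub_self_ne [Finite F] : ∃ c : F, ∀ t, t ^ 2 - t ≠ c := by
  have hinj : ¬Function.Injective fun t : F ↦ t ^ 2 - t := fun h ↦
    zero_ne_one (h (by simp : (0 : F) ^ 2 - 0 = 1 ^ 2 - 1))
  simpa [Function.Surjective] using mt Finite.injective_iff_surjective.2 hinj

variable (F) in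
theorem exists_anisotropic_prod [Finite F] : ∃ Q : QuadraticForm F (F × F), Q.Anisotropic := by
  obtain ⟨c, hc⟩ := exists_forall_sq_sub_self_ne (F := F)
  let u := LinearMap.fst F F F
  let v := LinearMap.snd F F F
  refine ⟨linMulLin u (u - v) - c • linMulLin v v, ?_⟩
  rintro ⟨a, b⟩ hab
  replace hab : a * (a - b) - c * (b * b) = 0 := hab
  obtain rfl : b = 0 := by
    by_contra hb
    refine hc (a / b) ?_
    field_simp
    linear_combination hab
  simpa using hab

variable (F) in
theorem exists_isEllipticForm [Finite F] :
    ∃ Q : QuadraticForm F ((F × F) × (F × F) × (F × F)), IsEllipticForm Q := by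
  obtain ⟨N, hN⟩ := exists_anisotropic_prod F
  refine ⟨(hyperbolicPlane F).prod ((hyperbolicPlane F).prod N), ?_, ?_, ?_⟩
  · exact radical_hyperbolicPlane_prod_eq_bot
      (radical_hyperbolicPlane_prod_eq_bot (radical_eq_bot_of_anisotropic hN))
  · simp only [Nat.card_prod]
    ring
  · rw [ncard_singular_hyperbolicPlane_prod, ncard_singular_hyperbolicPlane_prod,
      ncard_singular_of_anisotropic hN]
    simp only [Nat.card_prod]
    obtain ⟨r, hr⟩ : ∃ r, Nat.card F = r + 1 := Nat.exists_eq_add_of_le' Nat.card_pos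
    rw [hr, Nat.add_sub_cancel]
    ring

end EllipticForm

/-- For every prime power `q`, there is a ball packing in dimension
`q³ - q² + q + 1` whose tangency graph has chromatic number exactly `q³ + 3`. -/
theorem exists_ball_packing_chromatic_of_primePow (q : ℕ) (hq : IsPrimePow q) :
    ∃ (n : ℕ) (c : Fin n → EuclideanSpace ℝ (Fin (q ^ 3 - q ^ 2 + q + 1))) (r : Fin n → ℝ),
      (∀ i, 0 < r i) ∧
      (∀ i j, i ≠ j → r i + r j ≤ dist (c i) (c j)) ∧
      (tangencyGraph c r).chromaticNumber = ((q ^ 3 + 3 : ℕ) : ℕ∞) := by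
  classical
  obtain ⟨instField⟩ : Nonempty (Field (Fin q)) :=
    Fintype.nonempty_field_iff.2 (by rwa [Fintype.card_fin])
  obtain ⟨Q, hQ⟩ := exists_isEllipticForm (Fin q)
  have := Fintype.ofFinite (QuadricPoint Q)
  have hsrg := hQ.isSRGWith
  have hcolor := hQ.not_colorable
  rw [Nat.card_fin] at hsrg hcolor
  have hq2 : (2 : ℝ) ≤ q := by exact_mod_cast hq.two_le
  have hcard : 2 < (q + 1) * (q ^ 3 + 1) :=
    (Nat.lt_add_one_of_le hq.two_le).trans_le (Nat.le_mul_of_pos_right _ (Nat.succ_pos _))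
  have hdim : ((q ^ 3 - q ^ 2 + q : ℕ) : ℝ) = q ^ 3 - q ^ 2 + q := by
    push_cast [Nat.pow_le_pow_right hq.pos (show 2 ≤ 3 by norm_num)]
    rfl
  obtain ⟨n, c, r, hpack, hchrom⟩ := exists_ball_packing_of_isSRGWith hsrg hcard
    (θ := (q : ℝ) ^ 2) (τ := -q) (by push_cast [hq.one_lt.le]; ring)
    (by push_cast [hq.one_lt.le]; ring) (by linarith) (by nlinarith)
    (d := q ^ 3 - q ^ 2 + q) (by rw [hdim]; push_cast; ring) hcolor
  exact ⟨n, c, r, hpack.1, hpack.2, hchrom⟩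
end

section
/- There exists a finite set P of points in EuclideanSpace ℝ (Fin 2) with pairwise distances at least 1 whose unit-distance graph (joining two points exactly when their distance equals 1) has chromatic number 4. -/
/-- The unit-distance graph on a set of points in Euclidean space:
two points are adjacent exactly when their distance equals `1`. -/
def unitDistanceGraph {d : ℕ} (P : Set (EuclideanSpace ℝ (Fin d))) :
    SimpleGraph P where
  Adj x y := dist (x : EuclideanSpace ℝ (Fin d)) (y : EuclideanSpace ℝ (Fin d)) = 1
  symm := by
    constructor
    intro x y h
    rwa [dist_comm]
  loopless := by
    constructor
    intro x h
    rw [dist_self] at h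
    norm_num at h

/-!
In a proper 3-colouring, opposite tips of a rhombus made of two equilateral triangles get the same
colour. Hence a chain of unit rhombi whose first and last tips are at distance `1` is not
3-colourable; the Moser spindle is such a chain, but some of its points are too close. Here the
chain runs through six rhombi from `(1/2, 0)` to `(-1/2, 0)`. The first rhombus has its opposite tip
at `(3/2, √2)`, the last one is its mirror image in the `y`-axis, and the middle four lie in a
triangular lattice containing `(±3/2, √2)`. They make a detour upwards, since a straight lattice
path between these two points would come too close to the outer rhombi.

The abscissae lie in `ℚ(√6)` and the ordinates in `√2 ℚ(√6)`, so after clearing denominators all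
squared distances lie in the ordered ring `ℤ√6`, where they are compared exactly.
-/

section RhombusChains

variable {V : Type*} {G : SimpleGraph V} {p q : V}

/-- The vertices `p` and `q` are opposite tips of a rhombus with short diagonal in `G`, that is,
both complete a common edge to a triangle. The degenerate rhombus `p = q` is allowed. -/
def RhombusOpposite (G : SimpleGraph V) (p q : V) : Prop :=
  ∃ a b, G.Adj a b ∧ G.Adj p a ∧ G.Adj p b ∧ G.Adj q a ∧ G.Adj q b

theorem RhombusOpposite.coloring_eq (h : RhombusOpposite G p q) (C : G.Coloring (Fin 3)) :
    C p = C q := by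
  obtain ⟨a, b, hab, hpa, hpb, hqa, hqb⟩ := h
  have := C.valid hab
  have := C.valid hpa
  have := C.valid hpb
  have := C.valid hqa
  have := C.valid hqb
  lia

theorem coloring_eq_of_rhombusChain (h : Relation.ReflTransGen (RhombusOpposite G) p q)
    (C : G.Coloring (Fin 3)) : C p = C q := by
  induction h with
  | refl => rfl
  | tail _ hr ih => exact ih.trans (hr.coloring_eq C)

theorem not_colorable_three_of_adj_of_rhombusChain (hadj : G.Adj p q)
    (hchain : Relation.ReflTransGen (RhombusOpposite G) p q) : ¬ G.Colorable 3 :=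
  fun ⟨C⟩ => C.valid hadj (coloring_eq_of_rhombusChain hchain C)

end RhombusChains

theorem chromaticNumber_unitDistanceGraph_range {V : Type*} {n : ℕ} {H : SimpleGraph V}
    {f : V → EuclideanSpace ℝ (Fin n)} (hf : Function.Injective f)
    (hdist : ∀ i j, dist (f i) (f j) = 1 ↔ H.Adj i j) :
    (unitDistanceGraph (Set.range f)).chromaticNumber = H.chromaticNumber :=
  have iso : H ≃g unitDistanceGraph (Set.range f) :=
    { toEquiv := Equiv.ofInjective f hf
      map_rel_iff' := hdist _ _ }
  (SimpleGraph.chromaticNumber_congr iso).symm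

section QuadraticIntegers

open Zsqrtd

variable {d : ℕ}

theorem zsqrtd_toReal_nonneg {a : ℤ√d} (ha : 0 ≤ a) : 0 ≤ toReal (Int.natCast_nonneg d) a := by
  have sqrt_sq : √(d : ℝ) ^ 2 = d := Real.sq_sqrt d.cast_nonneg
  rw [← nonneg_iff_zero_le] at ha
  obtain ⟨x, y, rfl | rfl | rfl⟩ := nonneg_cases ha
  · simp only [toReal_apply, Int.cast_natCast]
    positivity
  · have hxy : (d * y * y : ℝ) ≤ 1 * x * x := mod_cast nonnegg_pos_neg.1 ha
    have : y * √(d : ℝ) ≤ x :=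
      abs_le_of_sq_le_sq' (by rw [mul_pow, sqrt_sq]; linarith) x.cast_nonneg |>.2
    simpa using this
  · have hxy : (1 * x * x : ℝ) ≤ d * y * y := mod_cast nonnegg_neg_pos.1 ha
    have : x ≤ y * √(d : ℝ) :=
      abs_le_of_sq_le_sq' (by rw [mul_pow, sqrt_sq]; linarith) (by positivity) |>.2
    simpa using this

theorem zsqrtd_toReal_strictMono [Nonsquare d] :
    StrictMono (toReal (Int.natCast_nonneg d)) := by
  have injective : Function.Injective (toReal (Int.natCast_nonneg d)) :=
    toReal_injective _ fun n hn => Nonsquare.ns d n.natAbs (by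
      zify
      rw [hn, abs_mul_abs_self])
  refine Monotone.strictMono_of_injective (fun a b hab => ?_) injective
  simpa only [map_sub, sub_nonneg] using zsqrtd_toReal_nonneg (sub_nonneg.2 hab)

/-- The point `(X / N, √m Y / N)` of the plane, for quadratic integers `X` and `Y` in `ℤ√d`. -/
noncomputable def quadPoint (m N : ℕ) (z : ℤ√d × ℤ√d) : EuclideanSpace ℝ (Fin 2) :=
  !₂[toReal (Int.natCast_nonneg d) z.1 / N, √m * toReal (Int.natCast_nonneg d) z.2 / N]

/-- The form `X ^ 2 + m Y ^ 2`, which is `N ^ 2` times the squared norm of `quadPoint m N (X, Y)`.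
Its values stay in `ℤ√d`, where equality and order are decidable. -/
def quadForm (m : ℕ) (z : ℤ√d × ℤ√d) : ℤ√d :=
  z.1 ^ 2 + m * z.2 ^ 2

variable {m N : ℕ}

theorem mul_dist_quadPoint_sq (hN : N ≠ 0) (z w : ℤ√d × ℤ√d) :
    (N * dist (quadPoint m N z) (quadPoint m N w)) ^ 2 =
      toReal (Int.natCast_nonneg d) (quadForm m (z - w)) := by
  have sqrt_sq : √(m : ℝ) ^ 2 = m := Real.sq_sqrt m.cast_nonneg
  rw [mul_pow, EuclideanSpace.dist_sq_eq, Fin.sum_univ_two]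
  simp only [quadPoint, quadForm, Real.dist_eq, sq_abs, map_add, map_mul, map_pow, map_natCast,
    map_sub, Prod.fst_sub, Prod.snd_sub, Matrix.cons_val_zero, Matrix.cons_val_one]
  field_simp
  rw [sqrt_sq]
  ring

theorem dist_quadPoint_eq_one_iff [Nonsquare d] (hN : N ≠ 0) (z w : ℤ√d × ℤ√d) :
    dist (quadPoint m N z) (quadPoint m N w) = 1 ↔ quadForm m (z - w) = N ^ 2 := by
  rw [← (zsqrtd_toReal_strictMono (d := d)).injective.eq_iff, ← mul_dist_quadPoint_sq hN, map_pow,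
    map_natCast, sq_eq_sq₀ (by positivity) N.cast_nonneg, mul_eq_left₀ (Nat.cast_ne_zero.2 hN)]

theorem one_le_dist_quadPoint_iff [Nonsquare d] (hN : N ≠ 0) (z w : ℤ√d × ℤ√d) :
    1 ≤ dist (quadPoint m N z) (quadPoint m N w) ↔ N ^ 2 ≤ quadForm m (z - w) := by
  rw [← (zsqrtd_toReal_strictMono (d := d)).le_iff_le, ← mul_dist_quadPoint_sq hN, map_pow,
    map_natCast, sq_le_sq₀ N.cast_nonneg (by positivity), le_mul_iff_one_le_right (by positivity)]

end QuadraticIntegers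

section Spindle

instance nonsquare_six : Zsqrtd.Nonsquare 6 where
  ns n hn := by
    have : n < 3 := by nlinarith
    interval_cases n <;> lia

/-- Coordinates `(X, Y)` of the points `(X / 12, √2 Y / 12)` of the packing, where `⟨a, b⟩` stands
for `a + b √6`. The points are listed along the chain of rhombi, whose tips have the indices
`0`, `3`, `6`, `8`, `10`, `13`, `16`, and `i ↦ 16 - i` is the reflection in the `y`-axis. -/
def spindleCoord : Fin 17 → ℤ√(6 : ℕ) × ℤ√(6 : ℕ) :=
  ![(⟨6, 0⟩, ⟨0, 0⟩), (⟨12, -2⟩, ⟨6, 1⟩), (⟨12, 2⟩, ⟨6, -1⟩),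
    (⟨18, 0⟩, ⟨12, 0⟩), (⟨24, 0⟩, ⟨12, 3⟩), (⟨12, 0⟩, ⟨12, 3⟩),
    (⟨18, 0⟩, ⟨12, 6⟩), (⟨6, 0⟩, ⟨12, 6⟩),
    (⟨0, 0⟩, ⟨12, 3⟩),
    (⟨-6, 0⟩, ⟨12, 6⟩), (⟨-18, 0⟩, ⟨12, 6⟩),
    (⟨-12, 0⟩, ⟨12, 3⟩), (⟨-24, 0⟩, ⟨12, 3⟩), (⟨-18, 0⟩, ⟨12, 0⟩),
    (⟨-12, -2⟩, ⟨6, -1⟩), (⟨-12, 2⟩, ⟨6, 1⟩), (⟨-6, 0⟩, ⟨0, 0⟩)]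

/-- The points of the packing, a chain of six unit rhombi whose end tips are at distance `1`. -/
noncomputable def spindlePoint (i : Fin 17) : EuclideanSpace ℝ (Fin 2) :=
  quadPoint 2 12 (spindleCoord i)

/-- The tangency graph of the packing, with adjacency expressed in `ℤ√6` so that it is decidable. -/
def spindleGraph : SimpleGraph (Fin 17) where
  Adj i j := quadForm 2 (spindleCoord i - spindleCoord j) = (12 : ℕ) ^ 2
  symm := ⟨by decide⟩
  loopless := ⟨by decide⟩

instance : DecidableRel spindleGraph.Adj :=
  fun i j => inferInstanceAs
    (Decidable (quadForm 2 (spindleCoord i - spindleCoord j) = (12 : ℕ) ^ 2))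

theorem dist_spindlePoint_eq_one_iff (i j : Fin 17) :
    dist (spindlePoint i) (spindlePoint j) = 1 ↔ spindleGraph.Adj i j :=
  dist_quadPoint_eq_one_iff (by norm_num) _ _

theorem one_le_dist_spindlePoint {i j : Fin 17} (hij : i ≠ j) :
    1 ≤ dist (spindlePoint i) (spindlePoint j) := by
  have separated : ∀ i j, i ≠ j → (12 : ℕ) ^ 2 ≤ quadForm 2 (spindleCoord i - spindleCoord j) := by
    decide
  exact (one_le_dist_quadPoint_iff (by norm_num) _ _).2 (separated i j hij)

theorem spindlePoint_injective : Function.Injective spindlePoint := by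
  intro i j hij
  by_contra hne
  have := one_le_dist_spindlePoint hne
  rw [hij, dist_self] at this
  norm_num at this

theorem spindleGraph_colorable_four : spindleGraph.Colorable 4 :=
  ⟨.mk ![0, 1, 2, 0, 1, 2, 0, 1, 0, 2, 0, 1, 2, 0, 1, 2, 3] (by decide)⟩

theorem spindleGraph_rhombusChain :
    Relation.ReflTransGen (RhombusOpposite spindleGraph) 0 16 := by
  have rhombus_0_3 : RhombusOpposite spindleGraph 0 3 := ⟨1, 2, by decide⟩
  have rhombus_3_6 : RhombusOpposite spindleGraph 3 6 := ⟨4, 5, by decide⟩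
  have rhombus_6_8 : RhombusOpposite spindleGraph 6 8 := ⟨5, 7, by decide⟩
  have rhombus_8_10 : RhombusOpposite spindleGraph 8 10 := ⟨9, 11, by decide⟩
  have rhombus_10_13 : RhombusOpposite spindleGraph 10 13 := ⟨11, 12, by decide⟩
  have rhombus_13_16 : RhombusOpposite spindleGraph 13 16 := ⟨14, 15, by decide⟩
  exact .head rhombus_0_3 <| .head rhombus_3_6 <| .head rhombus_6_8 <| .head rhombus_8_10 <|
    .head rhombus_10_13 <| .single rhombus_13_16

theorem spindleGraph_chromaticNumber : spindleGraph.chromaticNumber = 4 := by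
  have not_colorable : ¬ spindleGraph.Colorable 3 :=
    not_colorable_three_of_adj_of_rhombusChain (by decide) spindleGraph_rhombusChain
  exact SimpleGraph.chromaticNumber_eq_iff_colorable_not_colorable.2
    ⟨spindleGraph_colorable_four, not_colorable⟩

end Spindle

/-- There is a finite set of points in the plane with pairwise distances at
least `1` whose unit-distance graph has chromatic number `4`. -/
theorem unit_disk_packing_chromatic_four :
    ∃ P : Finset (EuclideanSpace ℝ (Fin 2)),
      (∀ x ∈ P, ∀ y ∈ P, x ≠ y → 1 ≤ dist x y) ∧
      (unitDistanceGraph (P : Set (EuclideanSpace ℝ (Fin 2)))).chromaticNumber = 4 := by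
  refine ⟨(Set.finite_range spindlePoint).toFinset, ?_, ?_⟩
  · simp only [Set.Finite.mem_toFinset, Set.forall_mem_range]
    exact fun i j hij => one_le_dist_spindlePoint (ne_of_apply_ne spindlePoint hij)
  · rw [Set.Finite.coe_toFinset, chromaticNumber_unitDistanceGraph_range spindlePoint_injective
      dist_spindlePoint_eq_one_iff, spindleGraph_chromaticNumber]
end

section
/- There exists a set of 16 points in EuclideanSpace ℝ (Fin 5) with pairwise distances at least 1 whose unit-distance graph (joining two points exactly when their distance equals 1) is isomorphic to the halved 5-cube graph (vertices: the even-weight vectors of (ZMod 2)^5, edges: pairs differing in exactly two coordinates) and has chromatic number 8. -/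
/-- The halved 5-cube graph (the Clebsch graph): vertices are the even-weight
vectors of `(ZMod 2)^5`, two vertices being adjacent exactly when they differ
in exactly two coordinates. -/
def halvedCube5 :
    SimpleGraph {x : Fin 5 → ZMod 2 // Even (Finset.univ.filter fun i => x i ≠ 0).card} where
  Adj x y := (Finset.univ.filter fun i => x.1 i ≠ y.1 i).card = 2
  symm := by
    constructor
    intro x y h
    have e : (Finset.univ.filter fun i => y.1 i ≠ x.1 i)
        = Finset.univ.filter fun i => x.1 i ≠ y.1 i :=
      Finset.filter_congr fun i _ => ne_comm
    rw [e]
    exact h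
  loopless := by
    constructor
    intro x h
    simp at h

/-!
Scale the cube `{0, 1}⁵` by `1 / √2`, so that vertices at Hamming distance `k` are at Euclidean
distance `√(k / 2)`. Two distinct vertices of even weight differ in an even, positive number of
coordinates, hence are at distance at least `1`, with equality exactly when they differ in two
coordinates.

Each coordinate separates either no pair or exactly two pairs among three binary vectors, so the
three pairwise Hamming distances add up to at most `2 * 5 = 10`. They cannot all be `4` or more, so
an independent set of the halved 5-cube has at most two of its `16` vertices and at least `8`
colours are needed. The pairs `{x, x + 11110}` are the classes of a colouring with `8` colours.
-/

section BinaryVectors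

variable {ι : Type*} [Fintype ι]

lemma natCast_hammingNorm_eq_sum (x : ι → ZMod 2) : (hammingNorm x : ZMod 2) = ∑ i, x i := by
  have ite_ne_zero (a : ZMod 2) : (if a ≠ 0 then 1 else 0) = a := by decide +revert
  simp only [hammingNorm, Finset.natCast_card_filter, ite_ne_zero]

lemma even_hammingNorm_iff_sum_eq_zero (x : ι → ZMod 2) :
    Even (hammingNorm x) ↔ ∑ i, x i = 0 := by
  rw [← ZMod.natCast_eq_zero_iff_even, natCast_hammingNorm_eq_sum]

lemma hammingDist_add_hammingDist_add_hammingDist_le (x y z : ι → ZMod 2) :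
    hammingDist x y + hammingDist x z + hammingDist y z ≤ 2 * Fintype.card ι := by
  have coordinate_le (a b c : ZMod 2) :
      (if a ≠ b then 1 else 0) + (if a ≠ c then 1 else 0) + (if b ≠ c then 1 else 0) ≤ 2 := by
    decide +revert
  simp only [hammingDist, Finset.card_filter, ← Finset.sum_add_distrib]
  calc _ ≤ ∑ _i : ι, 2 := Finset.sum_le_sum fun i _ => coordinate_le (x i) (y i) (z i)
    _ = 2 * Fintype.card ι := by simp [mul_comm]

/-- Binary vectors of even weight, the vertices of the halved cube. The weight is spelled out as in
`halvedCube5` instead of as `hammingNorm`, so that `EvenVector (Fin 5)` is the vertex type of that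
graph. -/
abbrev EvenVector (ι : Type*) [Fintype ι] : Type _ :=
  {x : ι → ZMod 2 // Even (Finset.univ.filter fun i => x i ≠ 0).card}

namespace EvenVector

lemma sum_eq_zero (x : EvenVector ι) : ∑ i, x.1 i = 0 :=
  (even_hammingNorm_iff_sum_eq_zero x.1).1 x.2

lemma even_hammingDist (x y : EvenVector ι) : Even (hammingDist x.1 y.1) := by
  rw [hammingDist_eq_hammingNorm, even_hammingNorm_iff_sum_eq_zero]
  simp only [Pi.add_apply, Pi.neg_apply, Finset.sum_add_distrib, Finset.sum_neg_distrib,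
    sum_eq_zero, neg_zero, add_zero]

lemma two_le_hammingDist {x y : EvenVector ι} (hxy : x ≠ y) : 2 ≤ hammingDist x.1 y.1 := by
  have hpos : 0 < hammingDist x.1 y.1 := hammingDist_pos.2 (Subtype.coe_ne_coe.2 hxy)
  obtain ⟨k, hk⟩ := even_hammingDist x y
  lia

lemma hammingDist_eq_two_of_card_lt_six (hι : Fintype.card ι < 6) {x y z : EvenVector ι}
    (hxy : x ≠ y) (hxz : x ≠ z) (hyz : y ≠ z) :
    hammingDist x.1 y.1 = 2 ∨ hammingDist x.1 z.1 = 2 ∨ hammingDist y.1 z.1 = 2 := by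
  have hsum := hammingDist_add_hammingDist_add_hammingDist_le x.1 y.1 z.1
  have two_or_four_le {u v : EvenVector ι} (huv : u ≠ v) :
      hammingDist u.1 v.1 = 2 ∨ 4 ≤ hammingDist u.1 v.1 := by
    have htwo := two_le_hammingDist huv
    obtain ⟨k, hk⟩ := even_hammingDist u v
    lia
  have hxy_dist := two_or_four_le hxy
  have hxz_dist := two_or_four_le hxz
  have hyz_dist := two_or_four_le hyz
  lia

end EvenVector

end BinaryVectors

/-- Tuples with zero sum correspond to arbitrary tuples with one entry fewer: the first entry is
minus the sum of the others. -/
def sumZeroEquivTail (A : Type*) [AddCommGroup A] (n : ℕ) :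
    {x : Fin (n + 1) → A // ∑ i, x i = 0} ≃ (Fin n → A) where
  toFun x := Fin.tail x.1
  invFun y := ⟨Fin.cons (-∑ i, y i) y, by simp [Fin.sum_univ_succ]⟩
  left_inv x := by
    have head_eq : -∑ i, Fin.tail x.1 i = x.1 0 :=
      neg_eq_of_add_eq_zero_left ((Fin.sum_univ_succ x.1).symm.trans x.2)
    simp only [head_eq, Fin.cons_self_tail]
  right_inv y := by simp only [Fin.tail_cons]

lemma EvenVector.card_fin_succ (n : ℕ) : Fintype.card (EvenVector (Fin (n + 1))) = 2 ^ n :=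
  calc Fintype.card (EvenVector (Fin (n + 1)))
    _ = Fintype.card {x : Fin (n + 1) → ZMod 2 // ∑ i, x i = 0} :=
      Fintype.card_congr (Equiv.subtypeEquivRight even_hammingNorm_iff_sum_eq_zero)
    _ = Fintype.card (Fin n → ZMod 2) := Fintype.card_congr (sumZeroEquivTail (ZMod 2) n)
    _ = 2 ^ n := by simp

section Coloring

variable {V : Type*} [Fintype V] {G : SimpleGraph V}

lemma card_le_indepNum_mul_of_colorable {n : ℕ} (hG : G.Colorable n) :
    Fintype.card V ≤ G.indepNum * n := by
  classical
  obtain ⟨C⟩ := hG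
  have card_fiber_le (c : Fin n) : (Finset.univ.filter fun v => C v = c).card ≤ G.indepNum := by
    apply SimpleGraph.IsIndepSet.card_le_indepNum
    simpa [SimpleGraph.Coloring.colorClass] using C.isIndepSet_colorClass c
  simpa using Finset.card_le_mul_card_image_of_maps_to (s := Finset.univ) (t := Finset.univ)
    (fun v _ => Finset.mem_univ (C v)) G.indepNum fun c _ => card_fiber_le c

lemma le_chromaticNumber_of_indepNum_le {n k : ℕ} (hk : 0 < k) (hG : G.indepNum ≤ k)
    (hn : k * n ≤ Fintype.card V) : n ≤ G.chromaticNumber := by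
  refine SimpleGraph.le_chromaticNumber_iff_colorable.2 fun m hm => ?_
  exact Nat.le_of_mul_le_mul_left
    (hn.trans ((card_le_indepNum_mul_of_colorable hm).trans (Nat.mul_le_mul_right m hG))) hk

end Coloring

lemma halvedCube5_adj_iff (x y : EvenVector (Fin 5)) :
    halvedCube5.Adj x y ↔ hammingDist x.1 y.1 = 2 :=
  Iff.rfl

lemma indepNum_halvedCube5_le_two : halvedCube5.indepNum ≤ 2 := by
  obtain ⟨s, hs⟩ := halvedCube5.exists_isNIndepSet_indepNum
  rw [← hs.card_eq]
  by_contra! hcard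
  obtain ⟨x, y, z, hx, hy, hz, hxy, hxz, hyz⟩ := Finset.two_lt_card_iff.1 hcard
  rcases EvenVector.hammingDist_eq_two_of_card_lt_six (by simp) hxy hxz hyz with h | h | h
  · exact hs.isIndepSet hx hy hxy h
  · exact hs.isIndepSet hx hz hxz h
  · exact hs.isIndepSet hy hz hyz h

lemma eq_vecCons_head_of_add_eq_zero {R : Type*} [Ring R] [CharP R 2] {d : Fin 5 → R}
    (hsum : ∑ i, d i = 0) (h4 : d 4 = 0) (h01 : d 0 + d 1 = 0) (h02 : d 0 + d 2 = 0) :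
    d = ![d 0, d 0, d 0, d 0, 0] := by
  have h1 : d 1 = d 0 := (CharTwo.add_eq_zero.1 h01).symm
  have h2 : d 2 = d 0 := (CharTwo.add_eq_zero.1 h02).symm
  have h3 : d 3 = d 0 := by
    rw [Fin.sum_univ_five, h01, zero_add, h2, h4, add_zero] at hsum
    exact (CharTwo.add_eq_zero.1 hsum).symm
  ext i
  fin_cases i
  exacts [rfl, h1, h2, h3, h4]

/-- The colouring of the halved 5-cube whose classes are the pairs `{x, x + 11110}`, given by three
linear forms that, together with the parity check, have common kernel `{00000, 11110}`. -/
def halvedCube5Coloring : halvedCube5.Coloring (ZMod 2 × ZMod 2 × ZMod 2) :=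
  SimpleGraph.Coloring.mk (fun x => (x.1 4, x.1 0 + x.1 1, x.1 0 + x.1 2)) <| by
    intro x y hadj hcolor
    obtain ⟨h4, h01, h02⟩ : x.1 4 = y.1 4 ∧ x.1 0 + x.1 1 = y.1 0 + y.1 1 ∧
        x.1 0 + x.1 2 = y.1 0 + y.1 2 := by simpa only [Prod.mk.injEq] using hcolor
    have hsub : x.1 - y.1 = ![(x.1 - y.1) 0, (x.1 - y.1) 0, (x.1 - y.1) 0, (x.1 - y.1) 0, 0] :=
      eq_vecCons_head_of_add_eq_zero (by simp [EvenVector.sum_eq_zero]) (by simp [h4])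
        (by simp [sub_add_sub_comm, h01]) (by simp [sub_add_sub_comm, h02])
    have hnorm (a : ZMod 2) : hammingNorm ![a, a, a, a, 0] ≠ 2 := by decide +revert
    rw [halvedCube5_adj_iff, hammingDist_comm, hammingDist_eq_hammingNorm, neg_add_eq_sub] at hadj
    exact hnorm _ (hsub ▸ hadj)

lemma chromaticNumber_halvedCube5 : halvedCube5.chromaticNumber = 8 := by
  apply le_antisymm
  · exact halvedCube5Coloring.colorable.chromaticNumber_le
  · exact le_chromaticNumber_of_indepNum_le two_pos indepNum_halvedCube5_le_two
      (EvenVector.card_fin_succ 4).ge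

section CubePoint

variable {ι : Type*} [Fintype ι]

/-- The vertex of the cube `[0, c]^ι` given by a binary vector. -/
def cubePoint (c : ℝ) (x : ι → ZMod 2) : EuclideanSpace ℝ ι :=
  WithLp.toLp 2 fun i => if x i = 0 then 0 else c

lemma dist_cubePoint (c : ℝ) (x y : ι → ZMod 2) :
    dist (cubePoint c x) (cubePoint c y) = √(c ^ 2 * hammingDist x y) := by
  have coordinate_dist_sq (a b : ZMod 2) :
      dist (if a = 0 then 0 else c) (if b = 0 then 0 else c) ^ 2 =
        c ^ 2 * if a ≠ b then 1 else 0 := by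
    have zero_or_one (a : ZMod 2) : a = 0 ∨ a = 1 := by decide +revert
    rcases zero_or_one a with rfl | rfl <;> rcases zero_or_one b with rfl | rfl <;>
      simp [Real.dist_eq]
  rw [EuclideanSpace.dist_eq]
  simp only [cubePoint, coordinate_dist_sq, ← Finset.mul_sum, hammingDist,
    Finset.natCast_card_filter]

/-- The placement of the halved `n`-cube as a unit ball packing: even binary vectors become vertices
of the cube of edge length `1 / √2`, whose face diagonals have length `1`. -/
noncomputable def evenCubePoint (x : EvenVector ι) : EuclideanSpace ℝ ι :=
  cubePoint (√2)⁻¹ x.1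

lemma dist_evenCubePoint (x y : EvenVector ι) :
    dist (evenCubePoint x) (evenCubePoint y) = √(hammingDist x.1 y.1 / 2) := by
  rw [evenCubePoint, evenCubePoint, dist_cubePoint, inv_pow, Real.sq_sqrt zero_le_two,
    inv_mul_eq_div]

lemma one_le_dist_evenCubePoint {x y : EvenVector ι} (hxy : x ≠ y) :
    1 ≤ dist (evenCubePoint x) (evenCubePoint y) := by
  rw [dist_evenCubePoint, Real.one_le_sqrt, one_le_div two_pos]
  exact_mod_cast EvenVector.two_le_hammingDist hxy

lemma dist_evenCubePoint_eq_one_iff (x y : EvenVector ι) :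
    dist (evenCubePoint x) (evenCubePoint y) = 1 ↔ hammingDist x.1 y.1 = 2 := by
  rw [dist_evenCubePoint, Real.sqrt_eq_one, div_eq_one_iff_eq two_ne_zero]
  norm_cast

lemma evenCubePoint_injective : Function.Injective (evenCubePoint (ι := ι)) := by
  intro x y hpoint
  by_contra hxy
  have hdist := one_le_dist_evenCubePoint hxy
  rw [hpoint, dist_self] at hdist
  exact zero_lt_one.not_ge hdist

end CubePoint

/-- A graph placed injectively in Euclidean space so that adjacency is being at distance `1` is the
unit-distance graph of its image. -/
noncomputable def unitDistanceGraphRangeIso {V : Type*} {G : SimpleGraph V} {d : ℕ}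
    {f : V → EuclideanSpace ℝ (Fin d)} (hf : Function.Injective f)
    (hadj : ∀ x y, dist (f x) (f y) = 1 ↔ G.Adj x y) :
    unitDistanceGraph (Set.range f) ≃g G :=
  SimpleGraph.Iso.symm ⟨Equiv.ofInjective f hf, hadj _ _⟩

/-- There are 16 points in `EuclideanSpace ℝ (Fin 5)` with pairwise distances
at least `1` whose unit-distance graph is isomorphic to the halved 5-cube
graph and has chromatic number `8`. -/
theorem exists_halved_cube_unit_ball_packing :
    ∃ P : Finset (EuclideanSpace ℝ (Fin 5)),
      P.card = 16 ∧
      (∀ x ∈ P, ∀ y ∈ P, x ≠ y → 1 ≤ dist x y) ∧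
      Nonempty ((unitDistanceGraph (P : Set (EuclideanSpace ℝ (Fin 5)))) ≃g halvedCube5) ∧
      (unitDistanceGraph (P : Set (EuclideanSpace ℝ (Fin 5)))).chromaticNumber = 8 := by
  let P : Finset (EuclideanSpace ℝ (Fin 5)) :=
    Finset.univ.map ⟨evenCubePoint, evenCubePoint_injective⟩
  have coe_P : (P : Set (EuclideanSpace ℝ (Fin 5))) = Set.range evenCubePoint := by simp [P]
  have iso : unitDistanceGraph (P : Set (EuclideanSpace ℝ (Fin 5))) ≃g halvedCube5 := by
    rw [coe_P]
    exact unitDistanceGraphRangeIso evenCubePoint_injective dist_evenCubePoint_eq_one_iff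
  refine ⟨P, ?_, ?_, ⟨iso⟩, ?_⟩
  · exact (Finset.card_map _).trans (EvenVector.card_fin_succ 4)
  · simp only [← Finset.mem_coe, coe_P, Set.forall_mem_range]
    exact fun x y hne => one_le_dist_evenCubePoint (ne_of_apply_ne evenCubePoint hne)
  · rw [SimpleGraph.chromaticNumber_congr iso, chromaticNumber_halvedCube5]
end
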